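/- Let N be a positive integer, 0 ≤ α < 1/4, and let x̃_{−N},…,x̃_N be a set of α-perturbed nodes. Then for every trigonometric polynomial q ∈ T_N, ((1−φ_α)²/(2π)) ∫_{−π}^{π} |q(x)|² dx ≤ (1/(2N+1)) Σ_{j=−N}^{N} |q(x̃_j)|² ≤ ((1+φ_α)²/(2π)) ∫_{−π}^{π} |q(x)|² dx, where φ_α = 1 − cos(πα) + sin(πα). -/

import Mathlib

open Real Finset

/-- `q` is a trigonometric polynomial of degree ≤ N. -/
def IsTrigPoly (N : ℕ) (q : ℝ → ℂ) : Prop :=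
  ∃ c : ℤ → ℂ, ∀ x : ℝ,
    q x = ∑ k ∈ Finset.Icc (-(N:ℤ)) (N:ℤ), c k * Complex.exp (Complex.I * (k : ℂ) * (x : ℂ))

/-- `x` is a set of α-perturbed nodes of size 2N+1. -/
def PerturbedNodes (N : ℕ) (α : ℝ) (x : ℤ → ℝ) : Prop :=
  ∀ j ∈ Finset.Icc (-(N:ℤ)) (N:ℤ),
    |x j - (j : ℝ) * (2*π/(2*N+1))| ≤ α * (2*π/(2*N+1))

theorem integral_exp_I_mul (ω : ℝ) :
    ∫ t in (-π)..π, Complex.exp (Complex.I * ω * t) = 2 * π * (sinc (π * ω) : ℝ) := by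
  rcases eq_or_ne ω 0 with rfl | hω
  · simp; ring
  · have hω' : (ω : ℂ) ≠ 0 := by exact_mod_cast hω
    rw [integral_exp_mul_complex (mul_ne_zero Complex.I_ne_zero hω'),
      Real.sinc_of_ne_zero (mul_ne_zero pi_ne_zero hω)]
    push_cast
    rw [Complex.sin]
    have := Complex.I_ne_zero
    have hπ : (π : ℂ) ≠ 0 := by exact_mod_cast pi_ne_zero
    field_simp
    simp only [Complex.I_sq]
    ring_nf

theorem hasSum_fourier_of_integral_eq {f : ℝ → ℂ} (hf : Continuous f) (hper : f (-π) = f π)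
    {a : ℤ → ℂ} (hint : ∀ m : ℤ, ∫ t in (-π)..π, f t * Complex.exp (-(Complex.I * m * t)) =
      2 * π * a m) (ha : Summable a) {t : ℝ} (ht : t ∈ Set.Icc (-π) π) :
    HasSum (fun m : ℤ => a m * Complex.exp (Complex.I * m * t)) (f t) := by
  have hT : Fact (0 < 2 * π) := ⟨two_pi_pos⟩
  have hend : -π + 2 * π = π := by ring
  have hπ : (π : ℂ) ≠ 0 := by exact_mod_cast pi_ne_zero
  let F : C(AddCircle (2 * π), ℂ) :=
    ⟨AddCircle.liftIco (2 * π) (-π) f,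
      AddCircle.liftIco_continuous (by rw [hend, hper]) hf.continuousOn⟩
  have hcoeff : fourierCoeff F = a := by
    ext m
    change fourierCoeff (AddCircle.liftIco (2 * π) (-π) f) m = a m
    rw [fourierCoeff_eq_intervalIntegral _ _ (-π), hend]
    have hcongr : ∫ s in (-π)..π, fourier (-m) (s : AddCircle (2 * π)) •
        AddCircle.liftIco (2 * π) (-π) f s =
        ∫ s in (-π)..π, f s * Complex.exp (-(Complex.I * m * s)) := by
      refine intervalIntegral.integral_congr_Ioo_of_le (by linarith [pi_pos]) fun s hs => ?_
      rw [AddCircle.liftIco_coe_apply ⟨hs.1.le, by rw [hend]; exact hs.2⟩, fourier_coe_apply,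
        smul_eq_mul, mul_comm]
      congr 2
      push_cast
      field_simp
    rw [hcongr, hint, Complex.real_smul]
    push_cast
    field_simp
  have hval : F (t : AddCircle (2 * π)) = f t := by
    change AddCircle.liftIco (2 * π) (-π) f t = f t
    rcases eq_or_lt_of_le ht.2 with rfl | hlt
    · rw [show ((π : ℝ) : AddCircle (2 * π)) = ((-π : ℝ) : AddCircle (2 * π)) by
        simpa [hend] using AddCircle.coe_add_period (2 * π) (-π)]
      rw [AddCircle.liftIco_coe_apply ⟨le_rfl, by linarith [pi_pos]⟩, hper]
    · exact AddCircle.liftIco_coe_apply ⟨ht.1, by rwa [hend]⟩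
  have h := has_pointwise_sum_fourier_series_of_summable (f := F) (by rwa [hcoeff])
    (t : AddCircle (2 * π))
  rw [hval, hcoeff] at h
  convert h using 2 with m
  rw [fourier_coe_apply, smul_eq_mul]
  congr 2
  push_cast
  field_simp

/-- If `d ↦ ∑ k, d k * E j k` is `√M` times an isometry, then twisting its kernel by a multiplier
`F j k = ∑ m, a j m * e m k` with `|a j m| ≤ g m` and unimodular `e m k` yields an operator of
norm at most `(∑ m, g m) * √M`. -/
theorem norm_toLp_multiplier_le {ι κ : Type*} [Fintype ι] [Nonempty ι]
    [Fintype κ] {E F : ι → κ → ℂ} {M : ℝ}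
    (hE : ∀ d : κ → ℂ, ∑ j, ‖∑ k, d k * E j k‖ ^ 2 = M * ∑ k, ‖d k‖ ^ 2)
    {a : ι → ℤ → ℝ} {e : ℤ → κ → ℂ} {g : ℤ → ℝ} {G : ℝ}
    (hF : ∀ j k, HasSum (fun m => (a j m : ℂ) * e m k) (F j k))
    (ha : ∀ j m, |a j m| ≤ g m) (he : ∀ m k, ‖e m k‖ = 1) (hG : HasSum g G) (c : κ → ℂ) :
    ‖(WithLp.toLp 2 fun j => ∑ k, c k * F j k * E j k : EuclideanSpace ℂ ι)‖ ≤
      G * √(M * ∑ k, ‖c k‖ ^ 2) := by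
  have hsum : HasSum (fun m => (WithLp.toLp 2 fun j =>
      (a j m : ℂ) * ∑ k, (c k * e m k) * E j k : EuclideanSpace ℂ ι))
      (WithLp.toLp 2 fun j => ∑ k, c k * F j k * E j k) := by
    have hpi : HasSum (fun m => fun j => (a j m : ℂ) * ∑ k, (c k * e m k) * E j k)
        (fun j => ∑ k, c k * F j k * E j k) := by
      refine Pi.hasSum.2 fun j => ?_
      simp_rw [Finset.mul_sum]
      refine hasSum_sum fun k _ => ?_
      exact (((hF j k).mul_left (c k)).mul_right (E j k)).congr_fun fun m => by ring
    exact (PiLp.continuousLinearEquiv 2 ℂ fun _ : ι => ℂ).symm.hasSum.2 hpi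
  refine hsum.norm_le_of_bounded (hG.mul_right _) fun m => ?_
  have hg : 0 ≤ g m := (abs_nonneg _).trans (ha (Classical.arbitrary ι) m)
  have hd := hE fun k => c k * e m k
  simp_rw [norm_mul, he, mul_one] at hd
  rw [EuclideanSpace.norm_eq, ← hd, ← Real.sqrt_sq hg, ← Real.sqrt_mul (sq_nonneg _),
    Finset.mul_sum]
  refine Real.sqrt_le_sqrt (Finset.sum_le_sum fun j _ => ?_)
  rw [← mul_pow, norm_mul, Complex.norm_real, Real.norm_eq_abs]
  gcongr
  exact ha j m

/-- The `m`-th Fourier coefficient of `1 - cos (δ t)` on `[-π, π]`, up to the sign `(-1) ^ m`. -/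
noncomputable def cosCoeff (δ : ℝ) (m : ℤ) : ℝ :=
  if m = 0 then 1 - sinc (π * δ) else δ * sin (π * δ) / (π * (m ^ 2 - δ ^ 2))

/-- The coefficient of `exp (i (m - 1/2) t)` in the expansion of `sin (δ t)` on `[-π, π]`,
up to the factor `i (-1) ^ m`. -/
noncomputable def sinCoeff (δ : ℝ) (m : ℤ) : ℝ :=
  δ * cos (π * δ) / (π * ((m - 1 / 2) ^ 2 - δ ^ 2))

theorem sinc_le_sinc {x y : ℝ} (hx : 0 ≤ x) (hxy : x ≤ y) (hy : y ≤ π) : sinc y ≤ sinc x := by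
  rcases hx.eq_or_lt with rfl | hx
  · simpa using sinc_le_one y
  have hy0 : 0 < y := hx.trans_le hxy
  rw [sinc_of_ne_zero hx.ne', sinc_of_ne_zero hy0.ne', div_le_div_iff₀ hy0 hx]
  have h := strictConcaveOn_sin_Icc.concaveOn.2 (Set.left_mem_Icc.2 pi_pos.le)
    (Set.mem_Icc.2 ⟨hy0.le, hy⟩) (sub_nonneg.2 ((div_le_one hy0).2 hxy))
    (div_nonneg hx.le hy0.le) (sub_add_cancel 1 (x / y))
  simp only [smul_eq_mul, mul_zero, sin_zero, zero_add, div_mul_cancel₀ _ hy0.ne'] at h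
  rw [div_mul_eq_mul_div, div_le_iff₀ hy0] at h
  linarith

theorem mul_cos_le_mul_cos {x y : ℝ} (hx : 0 ≤ x) (hxy : x ≤ y) (hy : y ≤ π / 4) :
    x * cos x ≤ y * cos y := by
  have hπ := pi_lt_four
  have hsin : 0 ≤ sin y := sin_nonneg_of_nonneg_of_le_pi (hx.trans hxy) (by linarith)
  have hcos : sin y ≤ cos y := by
    rw [← cos_pi_div_two_sub]
    exact cos_le_cos_of_nonneg_of_le_pi (hx.trans hxy) (by linarith) (by linarith)
  have hdiff : cos x - cos y ≤ sin y * (y - x) := by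
    rw [cos_sub_cos, ← neg_sub y x, neg_div, sin_neg]
    have h₁ : sin ((x + y) / 2) ≤ sin y :=
      sin_le_sin_of_le_of_le_pi_div_two (by linarith) (by linarith) (by linarith)
    have h₂ : sin ((y - x) / 2) ≤ (y - x) / 2 := sin_le (by linarith)
    have h₃ : 0 ≤ sin ((y - x) / 2) := sin_nonneg_of_nonneg_of_le_pi (by linarith) (by linarith)
    nlinarith [mul_le_mul h₁ h₂ h₃ hsin]
  nlinarith [mul_le_mul_of_nonneg_left hdiff hx, mul_nonneg (sub_nonneg.2 hxy) hsin,
    mul_le_mul_of_nonneg_left hcos (sub_nonneg.2 hxy),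
    mul_nonneg (mul_nonneg (sub_nonneg.2 hxy) hsin) (show (0 : ℝ) ≤ 1 - x by linarith)]

theorem cosCoeff_abs (δ : ℝ) (m : ℤ) : cosCoeff |δ| m = cosCoeff δ m := by
  rcases abs_choice δ with h | h <;> rw [h]
  simp [cosCoeff, sinc_neg]

theorem abs_sinCoeff_abs (δ : ℝ) (m : ℤ) : |sinCoeff |δ| m| = |sinCoeff δ m| := by
  rcases abs_choice δ with h | h <;> rw [h]
  simp [sinCoeff, neg_div]

theorem one_le_intCast_sq {m : ℤ} (hm : m ≠ 0) : (1 : ℝ) ≤ (m : ℝ) ^ 2 := by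
  exact_mod_cast (sq_pos_of_ne_zero hm : 0 < m ^ 2)

theorem sq_le_four_mul_sub_half_sq (m : ℤ) :
    (1 : ℝ) ≤ 4 * ((m : ℝ) - 1 / 2) ^ 2 ∧ (m : ℝ) ^ 2 ≤ 4 * ((m : ℝ) - 1 / 2) ^ 2 := by
  have hodd : 2 * m - 1 ≠ 0 := by omega
  have h₁ : 0 < (2 * m - 1) ^ 2 := sq_pos_of_ne_zero hodd
  have h₂ : m ^ 2 ≤ (2 * m - 1) ^ 2 := by
    rw [sq_le_sq]
    grind
  have h₁' : (1 : ℝ) ≤ (2 * m - 1) ^ 2 := by exact_mod_cast h₁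
  have h₂' : (m : ℝ) ^ 2 ≤ (2 * m - 1) ^ 2 := by exact_mod_cast h₂
  constructor <;> nlinarith

theorem abs_cosCoeff_le {α δ : ℝ} (hα : α ≤ 1 / 4) (hδ : |δ| ≤ α) (m : ℤ) :
    |cosCoeff δ m| ≤ cosCoeff α m := by
  rw [← cosCoeff_abs]
  generalize |δ| = δ, abs_nonneg δ = hδ0 at *
  have hπ := pi_pos
  rcases eq_or_ne m 0 with rfl | hm
  · simp only [cosCoeff, if_true]
    rw [abs_of_nonneg (sub_nonneg.2 (sinc_le_one _))]
    exact sub_le_sub_left (sinc_le_sinc (by positivity) (by gcongr) (by nlinarith)) 1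
  · have hm1 := one_le_intCast_sq hm
    simp only [cosCoeff, if_neg hm]
    have hs : 0 ≤ sin (π * δ) := sin_nonneg_of_nonneg_of_le_pi (by positivity) (by nlinarith)
    have hs' : sin (π * δ) ≤ sin (π * α) :=
      sin_le_sin_of_le_of_le_pi_div_two (by nlinarith) (by nlinarith) (by gcongr)
    have hα1 : 0 < (m : ℝ) ^ 2 - α ^ 2 := by nlinarith
    have hδ1 : 0 < (m : ℝ) ^ 2 - δ ^ 2 := by nlinarith
    have hα0 := hδ0.trans hδ
    have hsα := hs.trans hs'
    rw [abs_of_nonneg (by positivity)]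
    gcongr

theorem abs_sinCoeff_le {α δ : ℝ} (hα : α ≤ 1 / 4) (hδ : |δ| ≤ α) (m : ℤ) :
    |sinCoeff δ m| ≤ sinCoeff α m := by
  rw [← abs_sinCoeff_abs]
  generalize |δ| = δ, abs_nonneg δ = hδ0 at *
  have hπ := pi_pos
  have hm1 := (sq_le_four_mul_sub_half_sq m).1
  have hc : 0 ≤ cos (π * δ) := cos_nonneg_of_neg_pi_div_two_le_of_le (by nlinarith) (by nlinarith)
  have hcα : 0 ≤ cos (π * α) := cos_nonneg_of_neg_pi_div_two_le_of_le (by nlinarith) (by nlinarith)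
  have hmul : δ * cos (π * δ) ≤ α * cos (π * α) := by
    have h := mul_cos_le_mul_cos (x := π * δ) (y := π * α) (by positivity) (by gcongr)
      (by nlinarith)
    rw [mul_assoc, mul_assoc] at h
    exact le_of_mul_le_mul_left h hπ
  have hα1 : 0 < ((m : ℝ) - 1 / 2) ^ 2 - α ^ 2 := by nlinarith
  have hδ1 : 0 < ((m : ℝ) - 1 / 2) ^ 2 - δ ^ 2 := by nlinarith
  have hα0 := hδ0.trans hδ
  unfold sinCoeff
  rw [abs_of_nonneg (by positivity)]
  gcongr

theorem summable_cosCoeff {δ : ℝ} (hδ : |δ| ≤ 1 / 4) : Summable (cosCoeff δ) := by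
  refine Summable.of_norm_bounded_eventually
    ((summable_one_div_int_pow.2 one_lt_two).mul_left (|δ * sin (π * δ)| * 2)) ?_
  filter_upwards [(Set.finite_singleton (0 : ℤ)).compl_mem_cofinite] with m (hm : m ≠ 0)
  have hm1 := one_le_intCast_sq hm
  have hδ2 : δ ^ 2 ≤ (1 / 4) ^ 2 := sq_le_sq' (by linarith [abs_le.1 hδ]) (abs_le.1 hδ).2
  have hden : (m : ℝ) ^ 2 / 2 ≤ π * (m ^ 2 - δ ^ 2) := by nlinarith [pi_gt_three]
  rw [cosCoeff, if_neg hm, norm_div, norm_eq_abs, norm_eq_abs,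
    abs_of_pos (a := π * _) (by linarith), mul_assoc, div_eq_mul_inv]
  gcongr
  rw [mul_one_div, inv_le_comm₀ (by linarith) (by positivity), inv_div]
  exact hden

theorem summable_sinCoeff {δ : ℝ} (hδ : |δ| ≤ 1 / 4) : Summable (sinCoeff δ) := by
  refine Summable.of_norm_bounded_eventually
    ((summable_one_div_int_pow.2 one_lt_two).mul_left (|δ * cos (π * δ)| * 2)) ?_
  filter_upwards [(Set.finite_singleton (0 : ℤ)).compl_mem_cofinite] with m (hm : m ≠ 0)
  have hm1 := one_le_intCast_sq hm
  obtain ⟨hm2, hm3⟩ := sq_le_four_mul_sub_half_sq m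
  have hδ2 : δ ^ 2 ≤ (1 / 4) ^ 2 := sq_le_sq' (by linarith [abs_le.1 hδ]) (abs_le.1 hδ).2
  have hden : (m : ℝ) ^ 2 / 2 ≤ π * ((m - 1 / 2) ^ 2 - δ ^ 2) := by nlinarith [pi_gt_three]
  rw [sinCoeff, norm_div, norm_eq_abs, norm_eq_abs,
    abs_of_pos (a := π * _) (by linarith), mul_assoc, div_eq_mul_inv]
  gcongr
  rw [mul_one_div, inv_le_comm₀ (by linarith) (by positivity), inv_div]
  exact hden

theorem neg_one_zpow_mul_self (m : ℤ) : ((-1 : ℂ) ^ m) * (-1) ^ m = 1 := by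
  rw [← mul_zpow]
  simp

theorem exp_I_int_mul_pi (m : ℤ) : Complex.exp (Complex.I * m * (π : ℝ)) = (-1) ^ m := by
  rw [← Complex.exp_pi_mul_I, ← Complex.exp_int_mul]
  ring_nf

theorem neg_one_zpow_mul_cosCoeff {δ : ℝ} (hδ : |δ| ≤ 1 / 4) (m : ℤ) :
    (-1) ^ m * cosCoeff δ m = sinc (π * ((-m : ℤ) : ℝ)) -
      (sinc (π * (δ - m)) + sinc (π * (-δ - m))) / 2 := by
  rcases eq_or_ne m 0 with rfl | hm
  · simp only [cosCoeff, Int.cast_zero, sub_zero, mul_neg, sinc_neg]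
    simp
  · have hm1 := one_le_intCast_sq hm
    have hδ2 : δ ^ 2 ≤ (1 / 4) ^ 2 := sq_le_sq' (by linarith [abs_le.1 hδ]) (abs_le.1 hδ).2
    have hne : (m : ℝ) ^ 2 - δ ^ 2 ≠ 0 := by nlinarith
    have h₁ : δ - m ≠ 0 := fun h => hne (by linear_combination (-m - δ) * h)
    have h₂ : -δ - m ≠ 0 := fun h => hne (by linear_combination (-m + δ) * h)
    have hm' : ((-m : ℤ) : ℝ) ≠ 0 := by exact_mod_cast neg_ne_zero.2 hm
    have hπ := pi_ne_zero
    rw [cosCoeff, if_neg hm, sinc_of_ne_zero (mul_ne_zero hπ hm'),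
      sinc_of_ne_zero (mul_ne_zero hπ h₁), sinc_of_ne_zero (mul_ne_zero hπ h₂),
      mul_comm π ((-m : ℤ) : ℝ), sin_int_mul_pi,
      show π * (δ - m) = π * δ - m * π by ring, show π * (-δ - m) = -(π * δ) - m * π by ring,
      sin_sub_int_mul_pi, sin_sub_int_mul_pi, sin_neg,
      show π * δ - m * π = π * (δ - m) by ring, show -(π * δ) - m * π = π * (-δ - m) by ring]
    field_simp
    ring

theorem neg_one_zpow_mul_sinCoeff {δ : ℝ} (hδ : |δ| ≤ 1 / 4) (m : ℤ) :
    (-1) ^ m * sinCoeff δ m =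
      (sinc (π * (-δ - (m - 1 / 2))) - sinc (π * (δ - (m - 1 / 2)))) / 2 := by
  obtain ⟨hm2, -⟩ := sq_le_four_mul_sub_half_sq m
  have hδ2 : δ ^ 2 ≤ (1 / 4) ^ 2 := sq_le_sq' (by linarith [abs_le.1 hδ]) (abs_le.1 hδ).2
  have hne : ((m : ℝ) - 1 / 2) ^ 2 - δ ^ 2 ≠ 0 := by nlinarith
  have h₁ : δ - (m - 1 / 2) ≠ 0 := fun h => hne (by linear_combination (-(m - 1 / 2) - δ) * h)
  have h₂ : -δ - (m - 1 / 2) ≠ 0 := fun h => hne (by linear_combination (-(m - 1 / 2) + δ) * h)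
  have hπ := pi_ne_zero
  have hs₁ : sin (π * (δ - (m - 1 / 2))) = (-1) ^ m * cos (π * δ) := by
    rw [show π * (δ - (m - 1 / 2)) = π * δ + π / 2 - m * π by ring, sin_sub_int_mul_pi,
      sin_add_pi_div_two]
  have hs₂ : sin (π * (-δ - (m - 1 / 2))) = (-1) ^ m * cos (π * δ) := by
    rw [show π * (-δ - (m - 1 / 2)) = -(π * δ) + π / 2 - m * π by ring, sin_sub_int_mul_pi,
      sin_add_pi_div_two, cos_neg]
  rw [sinCoeff, sinc_of_ne_zero (mul_ne_zero hπ h₁), sinc_of_ne_zero (mul_ne_zero hπ h₂), hs₁, hs₂]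
  generalize (m : ℝ) - 1 / 2 = μ at *
  field_simp
  ring

theorem continuous_exp_I_mul (z : ℂ) : Continuous fun t : ℝ => Complex.exp (Complex.I * z * t) := by
  fun_prop

theorem hasSum_one_sub_cos {δ t : ℝ} (hδ : |δ| ≤ 1 / 4) (ht : t ∈ Set.Icc (-π) π) :
    HasSum (fun m : ℤ => (cosCoeff δ m : ℂ) * ((-1) ^ m * Complex.exp (Complex.I * m * t)))
      (1 - Complex.cos (δ * t)) := by
  have hint (ω : ℝ) : IntervalIntegrable (fun t : ℝ => Complex.exp (Complex.I * ω * t))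
      MeasureTheory.volume (-π) π := (continuous_exp_I_mul ω).intervalIntegrable _ _
  refine (hasSum_fourier_of_integral_eq
    (f := fun t => 1 - Complex.cos (δ * t)) (a := fun m => (((-1) ^ m * cosCoeff δ m : ℝ) : ℂ))
    (by fun_prop) (by simp) (fun m => ?_) ?_ ht).congr_fun fun m => ?_
  · have hexp (s : ℝ) : (1 - Complex.cos (δ * s)) * Complex.exp (-(Complex.I * m * s)) =
        Complex.exp (Complex.I * ((-m : ℤ) : ℝ) * s) -
          (Complex.exp (Complex.I * ((δ - m : ℝ) : ℂ) * s) +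
            Complex.exp (Complex.I * ((-δ - m : ℝ) : ℂ) * s)) / 2 := by
      rw [Complex.cos, sub_mul, one_mul, div_mul_eq_mul_div, add_mul, ← Complex.exp_add,
        ← Complex.exp_add]
      push_cast
      ring_nf
    simp_rw [hexp]
    rw [intervalIntegral.integral_sub (hint _) (((hint _).add (hint _)).div_const 2),
      intervalIntegral.integral_div, intervalIntegral.integral_add (hint _) (hint _),
      integral_exp_I_mul, integral_exp_I_mul, integral_exp_I_mul, neg_one_zpow_mul_cosCoeff hδ]
    push_cast
    ring
  · refine Complex.summable_ofReal.2 (Summable.of_norm ?_)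
    simpa [abs_mul, abs_zpow] using (summable_cosCoeff hδ).abs
  · push_cast
    ring

theorem hasSum_sin {δ t : ℝ} (hδ : |δ| ≤ 1 / 4) (ht : t ∈ Set.Icc (-π) π) :
    HasSum (fun m : ℤ => (sinCoeff δ m : ℂ) *
      (Complex.I * (-1) ^ m * Complex.exp (Complex.I * ((m - 1 / 2 : ℝ) : ℂ) * t)))
      (Complex.sin (δ * t)) := by
  have hint (ω : ℝ) : IntervalIntegrable (fun t : ℝ => Complex.exp (Complex.I * ω * t))
      MeasureTheory.volume (-π) π := (continuous_exp_I_mul ω).intervalIntegrable _ _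
  have hsum := hasSum_fourier_of_integral_eq
    (f := fun t => Complex.exp (Complex.I * (1 / 2) * t) * Complex.sin (δ * t))
    (a := fun m => (((-1) ^ m * sinCoeff δ m : ℝ) : ℂ) * Complex.I)
    (by fun_prop) ?_ (fun m => ?_) ?_ ht
  · have h := hsum.mul_left (Complex.exp (-(Complex.I * (1 / 2) * t)))
    rw [← mul_assoc, ← Complex.exp_add, neg_add_cancel, Complex.exp_zero, one_mul] at h
    refine h.congr_fun fun m => ?_
    have he : Complex.exp (Complex.I * ((m - 1 / 2 : ℝ) : ℂ) * t) =
        Complex.exp (-(Complex.I * (1 / 2) * t)) * Complex.exp (Complex.I * m * t) := by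
      rw [← Complex.exp_add]
      push_cast
      ring_nf
    rw [he]
    push_cast
    ring
  · have h₁ : Complex.exp (Complex.I * (1 / 2) * π) = Complex.I := by
      rw [show Complex.I * (1 / 2) * (π : ℂ) = π / 2 * Complex.I by ring,
        Complex.exp_pi_div_two_mul_I]
    have h₂ : Complex.exp (Complex.I * (1 / 2) * ((-π : ℝ) : ℂ)) = -Complex.I := by
      rw [Complex.ofReal_neg, mul_neg, Complex.exp_neg, h₁, Complex.inv_I]
    simp only [h₁, h₂]
    simp
  · have hexp (s : ℝ) : Complex.exp (Complex.I * (1 / 2) * s) * Complex.sin (δ * s) *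
          Complex.exp (-(Complex.I * m * s)) =
        (Complex.exp (Complex.I * ((-δ - (m - 1 / 2) : ℝ) : ℂ) * s) -
          Complex.exp (Complex.I * ((δ - (m - 1 / 2) : ℝ) : ℂ) * s)) * (Complex.I / 2) := by
      have h₁ : Complex.exp (Complex.I * ((-δ - (m - 1 / 2) : ℝ) : ℂ) * s) =
          Complex.exp (Complex.I * (1 / 2) * s) * Complex.exp (-(δ * s) * Complex.I) *
            Complex.exp (-(Complex.I * m * s)) := by
        rw [← Complex.exp_add, ← Complex.exp_add]
        push_cast
        ring_nf
      have h₂ : Complex.exp (Complex.I * ((δ - (m - 1 / 2) : ℝ) : ℂ) * s) =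
          Complex.exp (Complex.I * (1 / 2) * s) * Complex.exp (δ * s * Complex.I) *
            Complex.exp (-(Complex.I * m * s)) := by
        rw [← Complex.exp_add, ← Complex.exp_add]
        push_cast
        ring_nf
      rw [h₁, h₂, Complex.sin]
      ring
    simp_rw [hexp]
    rw [intervalIntegral.integral_mul_const, intervalIntegral.integral_sub (hint _) (hint _),
      integral_exp_I_mul, integral_exp_I_mul, neg_one_zpow_mul_sinCoeff hδ]
    push_cast
    ring
  · refine (Complex.summable_ofReal.2 (Summable.of_norm ?_)).mul_right _
    simpa [abs_mul, abs_zpow] using (summable_sinCoeff hδ).abs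

theorem hasSum_cosCoeff {δ : ℝ} (hδ : |δ| ≤ 1 / 4) :
    HasSum (cosCoeff δ) (1 - cos (π * δ)) := by
  have h := hasSum_one_sub_cos hδ (Set.right_mem_Icc.2 (by linarith [pi_pos]))
  simp_rw [exp_I_int_mul_pi, neg_one_zpow_mul_self, mul_one, mul_comm (δ : ℂ)] at h
  exact_mod_cast h

theorem hasSum_sinCoeff {δ : ℝ} (hδ : |δ| ≤ 1 / 4) : HasSum (sinCoeff δ) (sin (π * δ)) := by
  have h := hasSum_sin hδ (Set.right_mem_Icc.2 (by linarith [pi_pos]))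
  have hexp (m : ℤ) :
      Complex.I * (-1) ^ m * Complex.exp (Complex.I * ((m - 1 / 2 : ℝ) : ℂ) * π) = 1 := by
    have h₁ : Complex.exp (Complex.I * ((m - 1 / 2 : ℝ) : ℂ) * π) =
        Complex.exp (Complex.I * m * π) * Complex.exp (-(π / 2 * Complex.I)) := by
      rw [← Complex.exp_add]
      push_cast
      ring_nf
    rw [h₁, exp_I_int_mul_pi, Complex.exp_neg, Complex.exp_pi_div_two_mul_I]
    linear_combination (Complex.I * Complex.I⁻¹) * neg_one_zpow_mul_self m +
      mul_inv_cancel₀ Complex.I_ne_zero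
  simp_rw [hexp, mul_one, mul_comm (δ : ℂ)] at h
  exact_mod_cast h

theorem ofReal_norm_sum_mul_sq {κ : Type*} (s : Finset κ) (c e : κ → ℂ) :
    ((‖∑ k ∈ s, c k * e k‖ ^ 2 : ℝ) : ℂ) = ∑ k ∈ s, ∑ l ∈ s,
      c k * (starRingEnd ℂ) (c l) * (e k * (starRingEnd ℂ) (e l)) := by
  rw [Complex.ofReal_pow, ← Complex.mul_conj', map_sum, Finset.sum_mul_sum]
  refine Finset.sum_congr rfl fun k _ => Finset.sum_congr rfl fun l _ => ?_
  rw [map_mul]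
  ring

theorem exp_mul_conj_exp (k l : ℤ) (t : ℝ) :
    Complex.exp (Complex.I * k * t) * (starRingEnd ℂ) (Complex.exp (Complex.I * l * t)) =
      Complex.exp (Complex.I * ((k - l : ℤ) : ℝ) * t) := by
  rw [← Complex.exp_conj, ← Complex.exp_add]
  simp only [map_mul, Complex.conj_I, Complex.conj_ofReal, map_intCast]
  push_cast
  ring_nf

theorem sum_sum_mul_conj_mul_ite {κ : Type*} [DecidableEq κ] (s : Finset κ) (c : κ → ℂ) (M : ℝ) :
    ∑ k ∈ s, ∑ l ∈ s, c k * (starRingEnd ℂ) (c l) * (if k = l then (M : ℂ) else 0) =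
      ((M * ∑ k ∈ s, ‖c k‖ ^ 2 : ℝ) : ℂ) := by
  push_cast
  rw [Finset.mul_sum]
  refine Finset.sum_congr rfl fun k hk => ?_
  simp [hk, Complex.mul_conj', mul_comm]

theorem integral_norm_sum_exp_sq (s : Finset ℤ) (c : ℤ → ℂ) :
    ∫ t in (-π)..π, ‖∑ k ∈ s, c k * Complex.exp (Complex.I * k * t)‖ ^ 2 =
      2 * π * ∑ k ∈ s, ‖c k‖ ^ 2 := by
  have horth (k l : ℤ) : ∫ t in (-π)..π, Complex.exp (Complex.I * ((k - l : ℤ) : ℝ) * t) =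
      if k = l then ((2 * π : ℝ) : ℂ) else 0 := by
    rw [integral_exp_I_mul]
    split_ifs with h
    · simp [h]
    · have hne : ((k - l : ℤ) : ℝ) ≠ 0 := by exact_mod_cast sub_ne_zero.2 h
      rw [sinc_of_ne_zero (mul_ne_zero pi_ne_zero hne), mul_comm π ((k - l : ℤ) : ℝ),
        sin_int_mul_pi]
      simp
  have hcont (k l : ℤ) (z : ℂ) : IntervalIntegrable
      (fun t : ℝ => z * Complex.exp (Complex.I * ((k - l : ℤ) : ℝ) * t))
      MeasureTheory.volume (-π) π := Continuous.intervalIntegrable (by fun_prop) _ _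
  rw [← Complex.ofReal_inj, ← intervalIntegral.integral_ofReal, ← sum_sum_mul_conj_mul_ite]
  simp_rw [ofReal_norm_sum_mul_sq, exp_mul_conj_exp]
  rw [intervalIntegral.integral_finsetSum fun k _ =>
    Continuous.intervalIntegrable (by fun_prop) _ _]
  refine Finset.sum_congr rfl fun k _ => ?_
  rw [intervalIntegral.integral_finsetSum fun l _ => hcont k l _]
  refine Finset.sum_congr rfl fun l _ => ?_
  rw [intervalIntegral.integral_const_mul, horth]

theorem sub_one_mul_sum_Icc_zpow {z : ℂ} (hz : z ≠ 0) (N : ℕ) :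
    (z - 1) * ∑ j ∈ Finset.Icc (-(N : ℤ)) N, z ^ j = z ^ (N + 1 : ℤ) - z ^ (-(N : ℤ)) := by
  induction N with
  | zero => simp
  | succ n ih =>
    have hset : Finset.Icc (-((n + 1 : ℕ) : ℤ)) ((n + 1 : ℕ) : ℤ) =
        insert (-(n + 1 : ℤ)) (insert (n + 1 : ℤ) (Finset.Icc (-(n : ℤ)) n)) := by
      ext j
      simp only [Finset.mem_Icc, Finset.mem_insert]
      push_cast
      omega
    rw [hset, Finset.sum_insert (by simp; omega), Finset.sum_insert (by simp), mul_add, mul_add, ih]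
    have h₁ : z ^ (-(n : ℤ)) = z * z ^ (-(n + 1 : ℤ)) := by
      rw [← zpow_one_add₀ hz]
      ring_nf
    have h₂ : z ^ (((n + 1 : ℕ) : ℤ) + 1) = z * z ^ (n + 1 : ℤ) := by
      rw [← zpow_one_add₀ hz]
      push_cast
      ring_nf
    rw [h₁, h₂]
    push_cast
    ring

theorem sum_Icc_exp_eq_ite {N : ℕ} {k l : ℤ} (hk : k ∈ Finset.Icc (-(N : ℤ)) N)
    (hl : l ∈ Finset.Icc (-(N : ℤ)) N) :
    ∑ j ∈ Finset.Icc (-(N : ℤ)) N,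
      Complex.exp (Complex.I * ((k - l : ℤ) : ℝ) * ((j * (2 * π / (2 * N + 1)) : ℝ) : ℂ)) =
      if k = l then ((2 * N + 1 : ℝ) : ℂ) else 0 := by
  rw [Finset.mem_Icc] at hk hl
  have hM : (2 * N + 1 : ℂ) ≠ 0 := by exact_mod_cast Nat.succ_ne_zero (2 * N)
  split_ifs with h
  · have hcard : (N + 1 + N : ℤ).toNat = 2 * N + 1 := by omega
    simp [h, hcard]
  · set z := Complex.exp (2 * π * Complex.I * ((k - l : ℤ) / (2 * N + 1))) with hz
    have hterm (j : ℤ) : Complex.exp (Complex.I * ((k - l : ℤ) : ℝ) *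
        ((j * (2 * π / (2 * N + 1)) : ℝ) : ℂ)) = z ^ j := by
      rw [hz, ← Complex.exp_int_mul]
      push_cast
      ring_nf
    simp_rw [hterm]
    have hz0 : z ≠ 0 := Complex.exp_ne_zero _
    have hzM : z ^ (N + 1 : ℤ) = z ^ (-(N : ℤ)) := by
      have h1 : z ^ (2 * N + 1 : ℤ) = 1 := by
        rw [hz, ← Complex.exp_int_mul, Complex.exp_eq_one_iff]
        refine ⟨k - l, ?_⟩
        push_cast
        field_simp
      rw [show (N + 1 : ℤ) = -N + (2 * N + 1) by ring, zpow_add₀ hz0, h1, mul_one]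
    have hz1 : z - 1 ≠ 0 := by
      rw [sub_ne_zero, hz, Ne, Complex.exp_eq_one_iff]
      rintro ⟨n, hn⟩
      have hn' : ((k - l : ℤ) : ℂ) = ((n * (2 * N + 1) : ℤ) : ℂ) := by
        have hpi := Complex.two_pi_I_ne_zero
        rw [mul_comm] at hn
        have := mul_right_cancel₀ hpi hn
        rw [div_eq_iff hM] at this
        rw [this]
        push_cast
        ring
      have hn2 : k - l = n * (2 * N + 1) := by exact_mod_cast hn'
      rcases lt_trichotomy n 0 with h0 | h0 | h0
      · nlinarith
      · subst h0
        omega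
      · nlinarith
    have := sub_one_mul_sum_Icc_zpow hz0 N
    rw [hzM, sub_self] at this
    exact (mul_eq_zero.1 this).resolve_left hz1

theorem sum_norm_sum_exp_sq (N : ℕ) (d : Finset.Icc (-(N : ℤ)) N → ℂ) :
    ∑ j : Finset.Icc (-(N : ℤ)) N, ‖∑ k : Finset.Icc (-(N : ℤ)) N, d k *
      Complex.exp (Complex.I * ((k : ℤ) : ℂ) * (((j : ℤ) * (2 * π / (2 * N + 1)) : ℝ) : ℂ))‖ ^ 2 =
      (2 * N + 1) * ∑ k, ‖d k‖ ^ 2 := by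
  rw [← Complex.ofReal_inj, ← sum_sum_mul_conj_mul_ite, Complex.ofReal_sum]
  simp_rw [ofReal_norm_sum_mul_sq, exp_mul_conj_exp]
  rw [Finset.sum_comm]
  refine Finset.sum_congr rfl fun k _ => ?_
  rw [Finset.sum_comm]
  refine Finset.sum_congr rfl fun l _ => ?_
  rw [← Finset.mul_sum]
  have h := sum_Icc_exp_eq_ite k.2 l.2
  rw [← Finset.sum_coe_sort] at h
  rw [h]
  simp only [Subtype.ext_iff]


/-- Marcinkiewicz–Zygmund inequalities at α-perturbed nodes for α < 1/4. -/
theorem mz_inequalities_perturbed (N : ℕ) (hN : 0 < N) (α : ℝ) (hα0 : 0 ≤ α) (hα : α < 1/4)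
    (x : ℤ → ℝ) (hx : PerturbedNodes N α x)
    (q : ℝ → ℂ) (hq : IsTrigPoly N q) :
    ((1 - (1 - Real.cos (π*α) + Real.sin (π*α)))^2 / (2*π)) * (∫ t in (-π)..π, ‖q t‖^2) ≤
        (1/(2*(N:ℝ)+1)) * ∑ j ∈ Finset.Icc (-(N:ℤ)) (N:ℤ), ‖q (x j)‖^2 ∧
    (1/(2*(N:ℝ)+1)) * ∑ j ∈ Finset.Icc (-(N:ℤ)) (N:ℤ), ‖q (x j)‖^2 ≤
        ((1 + (1 - Real.cos (π*α) + Real.sin (π*α)))^2 / (2*π)) * (∫ t in (-π)..π, ‖q t‖^2) := by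
  obtain ⟨c, hc⟩ := hq
  set h : ℝ := 2 * π / (2 * N + 1) with hh
  have hM : (0 : ℝ) < 2 * N + 1 := by positivity
  have hh0 : 0 < h := by positivity
  have hα' : |α| ≤ 1 / 4 := by rw [abs_of_nonneg hα0]; exact hα.le
  let S := Finset.Icc (-(N : ℤ)) N
  have : Nonempty S := ⟨⟨0, by simp [S]⟩⟩
  let E : S → S → ℂ := fun j k => Complex.exp (Complex.I * ((k : ℤ) : ℂ) * (((j : ℤ) * h : ℝ) : ℂ))
  let δ : S → ℝ := fun j => x j / h - (j : ℤ)
  let T : S → ℝ := fun k => (k : ℤ) * h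
  let c' : S → ℂ := fun k => c k
  have hδ (j : S) : |δ j| ≤ α := by
    have hxj := hx j j.2
    rw [← hh] at hxj
    have hδj : δ j = (x j - (j : ℤ) * h) / h := by
      simp only [δ]
      field_simp
    rwa [hδj, abs_div, abs_of_pos hh0, div_le_iff₀ hh0]
  have hδ' (j : S) : |δ j| ≤ 1 / 4 := (hδ j).trans hα.le
  have hT (k : S) : T k ∈ Set.Icc (-π) π := by
    have hk := Finset.mem_Icc.1 k.2
    have hk1 : (-(N : ℝ)) ≤ (k : ℤ) := by exact_mod_cast hk.1
    have hk2 : ((k : ℤ) : ℝ) ≤ N := by exact_mod_cast hk.2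
    have hMh : h * (2 * N + 1) = 2 * π := div_mul_cancel₀ _ hM.ne'
    constructor <;> simp only [T] <;> nlinarith
  let R : ℝ := √((2 * N + 1) * ∑ k, ‖c' k‖ ^ 2)
  let u : EuclideanSpace ℂ S := WithLp.toLp 2 fun j => ∑ k, c' k * E j k
  let v : EuclideanSpace ℂ S := WithLp.toLp 2 fun j => q (x j)
  let p : EuclideanSpace ℂ S :=
    WithLp.toLp 2 fun j => ∑ k, c' k * (1 - Complex.cos (δ j * T k)) * E j k
  let r : EuclideanSpace ℂ S := WithLp.toLp 2 fun j => ∑ k, c' k * Complex.sin (δ j * T k) * E j k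
  have hu : ‖u‖ = R := by
    rw [EuclideanSpace.norm_eq]
    exact congrArg _ (sum_norm_sum_exp_sq N c')
  have hp : ‖p‖ ≤ (1 - cos (π * α)) * R :=
    norm_toLp_multiplier_le (sum_norm_sum_exp_sq N)
      (fun j k => hasSum_one_sub_cos (hδ' j) (hT k)) (fun j m => abs_cosCoeff_le hα.le (hδ j) m)
      (fun m k => by simp [Complex.norm_exp]) (hasSum_cosCoeff hα') c'
  have hr : ‖r‖ ≤ sin (π * α) * R :=
    norm_toLp_multiplier_le (sum_norm_sum_exp_sq N)
      (fun j k => hasSum_sin (hδ' j) (hT k)) (fun j m => abs_sinCoeff_le hα.le (hδ j) m)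
      (fun m k => by simp [Complex.norm_exp]) (hasSum_sinCoeff hα') c'
  have hv : v = u - p + Complex.I • r := by
    ext j
    simp only [v, u, p, r, PiLp.add_apply, PiLp.sub_apply, PiLp.smul_apply, smul_eq_mul]
    rw [hc, ← Finset.sum_coe_sort, Finset.mul_sum, ← Finset.sum_sub_distrib,
      ← Finset.sum_add_distrib]
    refine Finset.sum_congr rfl fun k _ => ?_
    have hxj : x j = (j : ℤ) * h + δ j * h := by
      simp only [δ]
      field_simp
      ring
    have hexp : Complex.exp (Complex.I * ((k : ℤ) : ℂ) * (x j : ℂ)) =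
        E j k * Complex.exp (δ j * T k * Complex.I) := by
      rw [← Complex.exp_add, hxj]
      simp only [T]
      push_cast
      ring_nf
    rw [hexp, Complex.exp_mul_I]
    simp only [c']
    ring
  have hdiff : |‖v‖ - ‖u‖| ≤ (1 - cos (π * α) + sin (π * α)) * R := by
    have hvu : v - u = Complex.I • r - p := by
      rw [hv]
      abel
    calc |‖v‖ - ‖u‖| ≤ ‖v - u‖ := abs_norm_sub_norm_le v u
      _ ≤ ‖Complex.I • r‖ + ‖p‖ := by
        rw [hvu]
        exact norm_sub_le _ _
      _ ≤ (1 - cos (π * α) + sin (π * α)) * R := by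
        rw [norm_smul, Complex.norm_I, one_mul]
        linarith
  rw [hu, abs_le] at hdiff
  have hφ : 0 ≤ 1 - (1 - cos (π * α) + sin (π * α)) := by
    have hπ := pi_pos
    have hle : cos (π / 2 - π * α) ≤ cos (π * α) :=
      cos_le_cos_of_nonneg_of_le_pi (by positivity) (by nlinarith) (by nlinarith)
    rw [cos_pi_div_two_sub] at hle
    linarith
  have hR0 : 0 ≤ R := Real.sqrt_nonneg _
  have hR : R ^ 2 = (2 * N + 1) * ∑ k ∈ Finset.Icc (-(N : ℤ)) N, ‖c k‖ ^ 2 := by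
    rw [Real.sq_sqrt (by positivity), ← Finset.sum_coe_sort (Finset.Icc _ _) fun k => ‖c k‖ ^ 2]
  have hv2 : ∑ j ∈ Finset.Icc (-(N : ℤ)) N, ‖q (x j)‖ ^ 2 = ‖v‖ ^ 2 := by
    rw [EuclideanSpace.norm_sq_eq, ← Finset.sum_coe_sort]
  have hint (z : ℝ) : z ^ 2 / (2 * π) * ∫ t in (-π)..π, ‖q t‖ ^ 2 =
      1 / (2 * (N : ℝ) + 1) * (z * R) ^ 2 := by
    simp_rw [hc]
    rw [integral_norm_sum_exp_sq, mul_pow, hR]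
    field_simp
  rw [hint, hint, hv2]
  constructor
  · gcongr
    linarith
  · gcongr
    linarith
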